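/- Let χ : K^× → ℤ/2ℤ be a group homomorphism whose kernel equals the norm group N_{L|K}(L^×), and let n ≥ 1 be such that χ vanishes on U_{n+1} but does not vanish identically on U_n. If e₁/e₂ ∉ U_{2n+1} (i.e. e₁ ≢ e₂ mod 𝔭^{2n+1}), then the subgroup of (ℤ/2ℤ)² generated by the set Im equals all of (ℤ/2ℤ)². -/

import Mathlib

/-- An additively written, normalized (i.e. surjective onto `ℤ`) discrete
valuation on a field `K`.  All axioms are imposed at nonzero arguments only,
so the value of `v` at `0` is irrelevant.  For a finite extension `K` of
`ℚ_[p]`, the normalized valuation `v : K^× → ℤ` of the paper is such a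
structure. -/
structure DValuation (K : Type*) [Field K] where
  /-- the valuation map -/
  v : K → ℤ
  v_mul : ∀ ⦃x y : K⦄, x ≠ 0 → y ≠ 0 → v (x * y) = v x + v y
  min_le_v_add : ∀ ⦃x y : K⦄, x ≠ 0 → y ≠ 0 → x + y ≠ 0 → min (v x) (v y) ≤ v (x + y)
  v_surj : ∀ m : ℤ, ∃ x : K, x ≠ 0 ∧ v x = m

namespace DValuation

variable {K : Type*} [Field K] (w : DValuation K)

/-- `u ∈ U_m` : `u` is (a unit) congruent to `1` modulo `𝔭^m`; for `m ≥ 1`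
this forces `v u = 0`, i.e. `u ∈ 𝔬^×`. -/
def IsUnit₁ (m : ℤ) (u : K) : Prop :=
  u = 1 ∨ m ≤ w.v (u - 1)

end DValuation

namespace DValuation

variable {K : Type*} [Field K] (w : DValuation K)

/-- `x ∈ 𝔭^m`. -/
def G (m : ℤ) (x : K) : Prop := x = 0 ∨ m ≤ w.v x

theorem v_one : w.v 1 = 0 := by
  have h := w.v_mul (one_ne_zero (α := K)) one_ne_zero
  simp at h
  exact h

theorem v_neg_one : w.v (-1) = 0 := by
  have h := w.v_mul (neg_ne_zero.2 (one_ne_zero (α := K))) (neg_ne_zero.2 one_ne_zero)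
  simp [v_one] at h
  omega

theorem v_neg (x : K) : w.v (-x) = w.v x := by
  by_cases hx : x = 0
  · simp [hx]
  have h := w.v_mul (neg_ne_zero.2 (one_ne_zero (α := K))) hx
  rw [v_neg_one] at h
  simpa using h

theorem v_inv {x : K} (hx : x ≠ 0) : w.v x⁻¹ = - w.v x := by
  have h := w.v_mul hx (inv_ne_zero hx)
  rw [mul_inv_cancel₀ hx, v_one] at h
  omega

theorem v_div {x y : K} (hx : x ≠ 0) (hy : y ≠ 0) : w.v (x / y) = w.v x - w.v y := by
  rw [div_eq_mul_inv, w.v_mul hx (inv_ne_zero hy), v_inv w hy]; ring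

variable {w}

theorem G.mono {m m' : ℤ} {x : K} (h : w.G m x) (hm : m' ≤ m) : w.G m' x := by
  rcases h with h | h
  · exact Or.inl h
  · exact Or.inr (hm.trans h)

theorem G.add {m : ℤ} {x y : K} (hx : w.G m x) (hy : w.G m y) : w.G m (x + y) := by
  by_cases hx0 : x = 0
  · simpa [hx0] using hy
  by_cases hy0 : y = 0
  · simpa [hy0] using hx
  by_cases hxy : x + y = 0
  · exact Or.inl hxy
  have h := w.min_le_v_add hx0 hy0 hxy
  have h1 := hx.resolve_left hx0
  have h2 := hy.resolve_left hy0
  exact Or.inr ((le_min h1 h2).trans h)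

theorem G.neg {m : ℤ} {x : K} (hx : w.G m x) : w.G m (-x) := by
  rcases hx with h | h
  · exact Or.inl (by simp [h])
  · exact Or.inr (by rwa [v_neg])

theorem G.sub {m : ℤ} {x y : K} (hx : w.G m x) (hy : w.G m y) : w.G m (x - y) := by
  rw [sub_eq_add_neg]; exact hx.add hy.neg

theorem G.mul {m m' : ℤ} {x y : K} (hx : w.G m x) (hy : w.G m' y) : w.G (m + m') (x * y) := by
  by_cases hx0 : x = 0
  · exact Or.inl (by simp [hx0])
  by_cases hy0 : y = 0
  · exact Or.inl (by simp [hy0])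
  have h1 := hx.resolve_left hx0
  have h2 := hy.resolve_left hy0
  refine Or.inr ?_
  rw [w.v_mul hx0 hy0]; omega

theorem G.of_v {x : K} : w.G (w.v x) x := Or.inr le_rfl

theorem G.div {m : ℤ} {x y : K} (hx : w.G m x) (hy : y ≠ 0) : w.G (m - w.v y) (x / y) := by
  have := hx.mul (G.of_v (w := w) (x := y⁻¹))
  rw [v_inv w hy] at this
  rwa [div_eq_mul_inv, sub_eq_add_neg]

/-- `1 + r` is a unit when `r ∈ 𝔭`. -/
theorem add_ne_and_v {x h : K} {m : ℤ} (hx : x ≠ 0) (hh : w.G m h) (hm : w.v x < m) :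
    x + h ≠ 0 ∧ w.v (x + h) = w.v x := by
  have hne : x + h ≠ 0 := by
    intro h0
    have : h = -x := by linear_combination h0
    rcases hh with h1 | h1
    · rw [h1] at this; exact hx (neg_eq_zero.1 this.symm)
    · rw [this, v_neg] at h1; omega
  refine ⟨hne, ?_⟩
  by_cases hz : h = 0
  · simp [hz]
  have h1 := hh.resolve_left hz
  have h2 := w.min_le_v_add hx hz hne
  have h3 := w.min_le_v_add hne (neg_ne_zero.2 hz) (by simpa using hx)
  rw [v_neg] at h3
  simp only [add_neg_cancel_right] at h3
  rcases min_choice (w.v x) (w.v h) with h4 | h4 <;>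
  rcases min_choice (w.v (x+h)) (w.v h) with h5 | h5 <;> omega

theorem isUnit₁_iff {m : ℤ} {u : K} : w.IsUnit₁ m u ↔ w.G m (u - 1) := by
  unfold IsUnit₁ G
  rw [sub_eq_zero]

theorem v_unit {m : ℤ} {u : K} (h : w.IsUnit₁ m u) (hm : 1 ≤ m) : u ≠ 0 ∧ w.v u = 0 := by
  have h1 := add_ne_and_v (w := w) (one_ne_zero (α := K)) (isUnit₁_iff.1 h)
    (by rw [v_one]; omega)
  simpa [v_one] using h1

variable (w)

/-- The valuation ring. -/
def vring : ValuationSubring K where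
  carrier := {x | w.G 0 x}
  mul_mem' := fun ha hb => by simpa using G.mul ha hb
  one_mem' := Or.inr (by rw [v_one])
  add_mem' := fun ha hb => G.add ha hb
  zero_mem' := Or.inl rfl
  neg_mem' := fun ha => G.neg ha
  mem_or_inv_mem' := fun x => by
    by_cases hx : x = 0
    · exact Or.inl (Or.inl hx)
    rcases le_total 0 (w.v x) with h | h
    · exact Or.inl (Or.inr h)
    · exact Or.inr (Or.inr (by rw [v_inv w hx]; omega))

theorem mem_vring {x : K} : x ∈ w.vring ↔ w.G 0 x := Iff.rfl

theorem residue_zero_iff (a : w.vring) :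
    IsLocalRing.residue w.vring a = 0 ↔ w.G 1 (a : K) := by
  rw [IsLocalRing.residue_eq_zero_iff, IsLocalRing.mem_maximalIdeal, mem_nonunits_iff]
  by_cases ha : (a : K) = 0
  · have : a = 0 := Subtype.ext ha
    subst this
    simp [G]
  have ha0 := (w.mem_vring.1 a.2).resolve_left ha
  constructor
  · intro h
    refine Or.inr ?_
    by_contra hlt
    have hv : w.v (a : K) = 0 := by omega
    apply h
    refine IsUnit.of_mul_eq_one (⟨(a : K)⁻¹, Or.inr (by rw [v_inv w ha]; omega)⟩ : w.vring) ?_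
    exact Subtype.ext (mul_inv_cancel₀ ha)
  · rintro h hu
    have h := h.resolve_left ha
    obtain ⟨b, hb⟩ := isUnit_iff_exists_inv.1 hu
    have hb' : (a : K) * (b : K) = 1 := by exact_mod_cast congrArg Subtype.val hb
    have hb0 : (b : K) ≠ 0 := by rintro h0; rw [h0] at hb'; simp at hb'
    have h2 := w.v_mul ha hb0
    rw [hb', v_one] at h2
    have := (w.mem_vring.1 b.2).resolve_left hb0
    omega

section two

variable [Algebra ℚ_[2] K] [FiniteDimensional ℚ_[2] K]

theorem v_two_pos
    (hext : ∀ x : ℚ_[2], x ≠ 0 →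
      w.v (algebraMap ℚ_[2] K x) = w.v (algebraMap ℚ_[2] K 2) * x.valuation) :
    0 < w.v (algebraMap ℚ_[2] K 2) := by
  have h0 : 0 ≤ w.v (algebraMap ℚ_[2] K 2) := by
    have h1 : w.G 0 (1 : K) := Or.inr (by rw [v_one])
    have h2 := h1.add h1
    have h3 : (1 : K) + 1 = algebraMap ℚ_[2] K 2 := by rw [map_ofNat]; norm_num
    rw [h3] at h2
    exact h2.resolve_left ((map_ne_zero _).2 two_ne_zero)
  by_contra hlt
  have hz : w.v (algebraMap ℚ_[2] K 2) = 0 := by omega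
  have hmem : ∀ x : ℚ_[2], algebraMap ℚ_[2] K x ∈ w.vring.toSubring := by
    intro x
    by_cases hx : x = 0
    · rw [hx, map_zero]; exact Or.inl rfl
    · exact Or.inr (by rw [hext x hx, hz]; simp)
  let φ : ℚ_[2] →+* w.vring := (algebraMap ℚ_[2] K).codRestrict w.vring.toSubring hmem
  obtain ⟨x, hx, hvx⟩ := w.v_surj (-1)
  obtain ⟨p, hp, hpx⟩ := Algebra.IsIntegral.isIntegral (R := ℚ_[2]) x
  have hint : IsIntegral w.vring x := by
    refine ⟨p.map φ, hp.map φ, ?_⟩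
    rw [Polynomial.eval₂_map]
    exact hpx
  obtain ⟨y, hy⟩ := IsIntegrallyClosed.isIntegral_iff.1 hint
  have hy2 := w.mem_vring.1 y.2
  have hy' : (y : K) = x := hy
  rw [hy'] at hy2
  have := hy2.resolve_left hx
  omega

theorem finite_residue
    (hext : ∀ x : ℚ_[2], x ≠ 0 →
      w.v (algebraMap ℚ_[2] K x) = w.v (algebraMap ℚ_[2] K 2) * x.valuation) :
    Finite (IsLocalRing.ResidueField w.vring) := by
  have hpos := w.v_two_pos hext
  have hmem : ∀ x : ℤ_[2], algebraMap ℚ_[2] K (x : ℚ_[2]) ∈ w.vring.toSubring := by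
    intro x
    by_cases hx : (x : ℚ_[2]) = 0
    · rw [hx, map_zero]; exact Or.inl rfl
    · refine Or.inr ?_
      rw [hext _ hx]
      have : 0 ≤ (x : ℚ_[2]).valuation := by
        exact (Padic.norm_le_one_iff_val_nonneg _).1 x.2
      positivity
  let φ : ℤ_[2] →+* w.vring :=
    ((algebraMap ℚ_[2] K).comp PadicInt.Coe.ringHom).codRestrict w.vring.toSubring hmem
  have hφ : ∀ x, ((φ x : w.vring) : K) = algebraMap ℚ_[2] K (x : ℚ_[2]) := fun x => rfl
  set k := IsLocalRing.ResidueField w.vring with hk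
  let ρ : ℤ_[2] →+* k := (IsLocalRing.residue w.vring).comp φ
  have hρ2 : ρ 2 = 0 := by
    change IsLocalRing.residue w.vring (φ 2) = 0
    rw [residue_zero_iff, hφ]
    exact Or.inr hpos
  have h2k : (2 : k) = 0 := by rw [← hρ2, map_ofNat]
  have : CharP k 2 := CharTwo.of_one_ne_zero_of_two_eq_zero one_ne_zero h2k
  let : Algebra (ZMod 2) k := ZMod.algebra k 2
  have hρ : ∀ z, ρ z = algebraMap (ZMod 2) k (PadicInt.toZMod z) := by
    intro z
    have h1 := PadicInt.toZMod_spec (p := 2) z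
    rw [PadicInt.maximalIdeal_eq_span_p, Ideal.mem_span_singleton] at h1
    obtain ⟨s, hs⟩ := h1
    have h3 : z = (ZMod.cast (PadicInt.toZMod z) : ℤ_[2]) + 2 * s := by
      push_cast at hs
      linear_combination hs
    have h4 : ρ z = ρ (ZMod.cast (PadicInt.toZMod z) : ℤ_[2]) := by
      conv_lhs => rw [h3]
      rw [map_add, map_mul, hρ2]; simp
    rw [h4, ZMod.cast_eq_val, map_natCast, ← map_natCast (algebraMap (ZMod 2) k), ZMod.natCast_zmod_val]
  let b := Module.Basis.ofVectorSpace (ZMod 2) k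
  have hsurj := IsLocalRing.residue_surjective (R := w.vring)
  choose c hc using fun i => hsurj (b i)
  have hli : LinearIndependent ℚ_[2] (fun i => (c i : K)) := by
    rw [linearIndependent_iff']
    intro s g hg
    by_contra! hne
    obtain ⟨i1, hi1, hgi1⟩ := hne
    obtain ⟨i0, hi0, hmax⟩ := s.exists_max_image (fun i => ‖g i‖) ⟨i1, hi1⟩
    have hg0 : g i0 ≠ 0 := by
      have := hmax i1 hi1
      have h2 := norm_pos_iff.2 hgi1
      exact norm_pos_iff.1 (h2.trans_le this)
    have hle : ∀ i ∈ s, ‖g i / g i0‖ ≤ 1 := by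
      intro i hi
      rw [norm_div]
      exact div_le_one_of_le₀ (hmax i hi) (norm_nonneg _)
    classical
    let h : _ → ℤ_[2] := fun i => if hi : i ∈ s then ⟨g i / g i0, hle i hi⟩ else 0
    have hh : ∀ i ∈ s, ((h i : ℤ_[2]) : ℚ_[2]) = g i / g i0 := by
      intro i hi
      simp [h, hi]
    have hsum : ∑ i ∈ s, φ (h i) * c i = 0 := by
      apply Subtype.ext
      push_cast
      have : ∀ i ∈ s, ((φ (h i) : w.vring) : K) * (c i : K)
          = (g i0)⁻¹ • (g i • (c i : K)) := by
        intro i hi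
        rw [hφ, hh i hi, smul_smul, Algebra.smul_def, div_eq_mul_inv, mul_comm (g i)]
      rw [Finset.sum_congr rfl this, ← Finset.smul_sum, hg, smul_zero]
    have hsum2 := congrArg (IsLocalRing.residue w.vring) hsum
    rw [map_sum, map_zero] at hsum2
    have hsum3 : ∑ i ∈ s, (PadicInt.toZMod (h i)) • b i = 0 := by
      rw [← hsum2]
      refine Finset.sum_congr rfl fun i _ => ?_
      rw [map_mul, hc, Algebra.smul_def, ← hρ]
      rfl
    have := linearIndependent_iff'.1 b.linearIndependent s _ hsum3 i0 hi0
    have h1 : h i0 = 1 := by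
      apply Subtype.ext
      rw [hh i0 hi0, div_self hg0]; rfl
    rw [h1, map_one] at this
    exact one_ne_zero this
  have := hli.finite
  have : Module.Finite (ZMod 2) k := Module.Finite.of_basis b
  exact Module.finite_of_finite (ZMod 2)

end two

end DValuation

theorem zmod2_cases (a : ZMod 2) : a = 0 ∨ a = 1 := by
  revert a; decide

/-- In a finite field with a nonzero additive character `ψ` to `ℤ/2`, for every `δ ≠ 0`
there is `c` with `ψ c = ψ (δ / c) = 1`. -/
theorem finite_field_pigeonhole {k : Type*} [Field k] [Finite k] (ψ : k → ZMod 2)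
    (hadd : ∀ a b, ψ (a + b) = ψ a + ψ b) (s : k) (hs : ψ s = 1) (δ : k) (hδ : δ ≠ 0) :
    ∃ c, ψ c = 1 ∧ ψ (δ / c) = 1 := by
  classical
  by_contra! hno
  have h0 : ψ 0 = 0 := by
    have := hadd 0 0
    simpa using this
  let g : k → k := fun c => if ψ c = 1 then δ / c else c + s
  have hne : ∀ c, ψ c = 1 → c ≠ 0 := by
    rintro c hc rfl
    rw [h0] at hc; exact zero_ne_one hc
  have hg1 : ∀ c, ψ c = 1 → g c = δ / c := fun c hc => if_pos hc
  have hg0 : ∀ c, ψ c ≠ 1 → g c = c + s := fun c hc => if_neg hc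
  have hψ0 : ∀ c, ψ c ≠ 1 → ψ (c + s) = 1 := by
    intro c hc
    rw [hadd, hs, (zmod2_cases _).resolve_right hc, zero_add]
  have hinj : Function.Injective g := by
    intro a b hab
    by_cases ha : ψ a = 1 <;> by_cases hb : ψ b = 1
    · rw [hg1 a ha, hg1 b hb] at hab
      have ha0 := hne a ha
      have hb0 := hne b hb
      field_simp at hab
      exact hab.symm
    · rw [hg1 a ha, hg0 b hb] at hab
      exact absurd (by rw [hab]; exact hψ0 b hb) (hno a ha)
    · rw [hg0 a ha, hg1 b hb] at hab
      exact absurd (by rw [← hab]; exact hψ0 a ha) (hno b hb)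
    · rw [hg0 a ha, hg0 b hb] at hab
      exact add_right_cancel hab
  obtain ⟨c, hc⟩ := (Finite.injective_iff_surjective.1 hinj) 0
  by_cases h : ψ c = 1
  · rw [hg1 c h] at hc
    exact div_ne_zero hδ (hne c h) hc
  · rw [hg0 c h] at hc
    have := hψ0 c h
    rw [hc, h0] at this
    exact zero_ne_one this

namespace DValuation

section chi

variable {K : Type*} [Field K] {w : DValuation K} {χ : K → ZMod 2} {n : ℕ}

theorem chi_one (hχ : ∀ ⦃x y : K⦄, x ≠ 0 → y ≠ 0 → χ (x * y) = χ x + χ y) : χ 1 = 0 := by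
  have := hχ (one_ne_zero (α := K)) one_ne_zero
  simpa using this

theorem chi_inv (hχ : ∀ ⦃x y : K⦄, x ≠ 0 → y ≠ 0 → χ (x * y) = χ x + χ y) {x : K}
    (hx : x ≠ 0) : χ x⁻¹ = χ x := by
  have := hχ hx (inv_ne_zero hx)
  rw [mul_inv_cancel₀ hx, chi_one hχ] at this
  rcases zmod2_cases (χ x) with h | h <;> rcases zmod2_cases (χ x⁻¹) with h' | h' <;>
    rw [h, h'] at this <;> rw [h, h'] <;> revert this <;> decide

theorem chi_add (hχ : ∀ ⦃x y : K⦄, x ≠ 0 → y ≠ 0 → χ (x * y) = χ x + χ y)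
    (hvan : ∀ u : K, w.IsUnit₁ ((n : ℤ) + 1) u → χ u = 0) {x h : K} (hx : x ≠ 0)
    (hh : w.G (w.v x + n + 1) h) : χ (x + h) = χ x := by
  have h1 : x + h = x * (1 + h / x) := by field_simp
  have h2 : w.IsUnit₁ ((n : ℤ) + 1) (1 + h / x) := by
    rw [isUnit₁_iff]
    have := hh.div hx
    simp only [add_sub_cancel_left]
    exact this.mono (by omega)
  have h3 := v_unit h2 (by omega)
  rw [h1, hχ hx h3.1, hvan _ h2, add_zero]

/-- An element of `U_n` with `χ = 1` has exact level `n`. -/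
theorem exists_u (hvan : ∀ u : K, w.IsUnit₁ ((n : ℤ) + 1) u → χ u = 0)
    (hnonvan : ∃ u : K, w.IsUnit₁ (n : ℤ) u ∧ χ u ≠ 0) :
    ∃ z : K, z ≠ 0 ∧ w.v z = n ∧ χ (1 + z) = 1 := by
  obtain ⟨u, hu, hne⟩ := hnonvan
  have h1 : ¬ w.G ((n : ℤ) + 1) (u - 1) := fun h => hne (hvan u (isUnit₁_iff.2 h))
  have h2 := isUnit₁_iff.1 hu
  unfold G at h1 h2
  push Not at h1
  have h3 := h2.resolve_left h1.1
  exact ⟨u - 1, h1.1, by omega, by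
    rw [add_sub_cancel]; exact (zmod2_cases _).resolve_left hne⟩

theorem exists_pair (hfin : Finite (IsLocalRing.ResidueField w.vring))
    (hχ : ∀ ⦃x y : K⦄, x ≠ 0 → y ≠ 0 → χ (x * y) = χ x + χ y) (hn : 1 ≤ n)
    (hvan : ∀ u : K, w.IsUnit₁ ((n : ℤ) + 1) u → χ u = 0)
    {P : K} (hP : P ≠ 0) (hvP : w.v P = n) (hχP : χ (1 + P) = 1)
    {δ : K} (hδ : δ ≠ 0) (hvδ : w.v δ = 0) :
    ∃ a : K, a ≠ 0 ∧ w.v a = 0 ∧ χ (1 + a * P) = 1 ∧ χ (1 + δ / a * P) = 1 := by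
  have hGP : w.G n P := Or.inr hvP.ge
  have hunit : ∀ a, w.G 0 a → 1 + a * P ≠ 0 ∧ w.v (1 + a * P) = 0 := by
    intro a ha
    have := add_ne_and_v (w := w) (one_ne_zero (α := K)) (ha.mul hGP) (by rw [v_one]; omega)
    rwa [v_one] at this
  have hadd : ∀ a b, w.G 0 a → w.G 0 b →
      χ (1 + (a + b) * P) = χ (1 + a * P) + χ (1 + b * P) := by
    intro a b ha hb
    rw [← hχ (hunit a ha).1 (hunit b hb).1]
    have h1 : (1 + a * P) * (1 + b * P) = (1 + (a + b) * P) + (a * P) * (b * P) := by ring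
    have h2 := hunit (a + b) (ha.add hb)
    rw [h1, chi_add hχ hvan h2.1]
    exact ((ha.mul hGP).mul (hb.mul hGP)).mono (by omega)
  have hz : ∀ a, w.G 1 a → χ (1 + a * P) = 0 := by
    intro a ha
    apply hvan
    rw [isUnit₁_iff, add_sub_cancel_left]
    exact (ha.mul hGP).mono (by omega)
  have hres : ∀ a b : w.vring, IsLocalRing.residue w.vring a = IsLocalRing.residue w.vring b →
      χ (1 + (a : K) * P) = χ (1 + (b : K) * P) := by
    intro a b hab
    have h1 : IsLocalRing.residue w.vring (a - b) = 0 := by rw [map_sub, hab, sub_self]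
    rw [residue_zero_iff] at h1
    have h2 := hadd b ((a - b : w.vring) : K) b.2 (a - b).2
    rw [hz _ h1] at h2
    simpa using h2
  have hsurj := IsLocalRing.residue_surjective (R := w.vring)
  choose σ hσ using hsurj
  have hψ : ∀ a : w.vring, χ (1 + (σ (IsLocalRing.residue w.vring a) : K) * P)
      = χ (1 + (a : K) * P) := fun a => hres _ _ (hσ _)
  have hδm : δ ∈ w.vring := Or.inr hvδ.ge
  have hδr : IsLocalRing.residue w.vring ⟨δ, hδm⟩ ≠ 0 := by
    rw [Ne, residue_zero_iff]
    rintro (h | h)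
    · exact hδ h
    · change 1 ≤ w.v δ at h; omega
  obtain ⟨c, hc1, hc2⟩ := finite_field_pigeonhole
    (fun c => χ (1 + (σ c : K) * P)) (fun a b => by
      have h1 := hres (σ (a + b)) (σ a + σ b) (by rw [map_add, hσ, hσ, hσ])
      change χ (1 + (σ (a + b) : K) * P) = χ (1 + (σ a : K) * P) + χ (1 + (σ b : K) * P)
      rw [h1]
      exact hadd _ _ (σ a).2 (σ b).2)
    (IsLocalRing.residue w.vring 1) (by
      change χ (1 + (σ (IsLocalRing.residue w.vring 1) : K) * P) = 1
      rw [hψ]; simpa using hχP) _ hδr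
  change χ (1 + (σ c : K) * P) = 1 at hc1
  have hnG : ¬ w.G 1 (σ c : K) := fun h => by
    rw [hz _ h] at hc1; exact zero_ne_one hc1
  have ha0 : (σ c : K) ≠ 0 := fun h => hnG (Or.inl h)
  have hva : w.v (σ c : K) = 0 := by
    have h1 := (w.mem_vring.1 (σ c).2).resolve_left ha0
    have h2 : ¬ 1 ≤ w.v (σ c : K) := fun h => hnG (Or.inr h)
    omega
  refine ⟨σ c, ha0, hva, hc1, ?_⟩
  have hdm : δ / (σ c : K) ∈ w.vring := Or.inr (by rw [v_div w hδ ha0]; omega)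
  have hc0 : c ≠ 0 := by
    intro h
    rw [← hσ c, residue_zero_iff] at h
    exact hnG h
  rw [← hc2]
  refine (hψ ⟨_, hdm⟩).symm.trans ?_
  congr 5
  rw [eq_div_iff hc0]
  refine (congrArg (fun t => IsLocalRing.residue w.vring ⟨δ / (σ c : K), hdm⟩ * t)
    (hσ c).symm).trans ?_
  refine (map_mul (IsLocalRing.residue w.vring) _ _).symm.trans ?_
  congr 1
  exact Subtype.ext (div_mul_cancel₀ _ ha0)

/-- The point `(0, 1)`. -/
theorem exists_point_zero_one
    (hχ : ∀ ⦃x y : K⦄, x ≠ 0 → y ≠ 0 → χ (x * y) = χ x + χ y) (hn : 1 ≤ n)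
    (hvan : ∀ u : K, w.IsUnit₁ ((n : ℤ) + 1) u → χ u = 0)
    {z : K} (hz : z ≠ 0) (hvz : w.v z = n) (hχz : χ (1 + z) = 1)
    {e₁ e₂ : K} (he₁ : w.IsUnit₁ 1 e₁) (he₂ : w.IsUnit₁ 1 e₂) :
    ∃ x : K, x ≠ 0 ∧ x ≠ e₁ ∧ x ≠ e₂ ∧ χ (x * (x - e₁) * (x - e₂)) = 0 ∧
      χ x = 0 ∧ χ (x - e₁) = 1 := by
  obtain ⟨he10, hve1⟩ := v_unit he₁ le_rfl
  have hGz : w.G n z := Or.inr hvz.ge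
  have hu := add_ne_and_v (w := w) (one_ne_zero (α := K)) hGz (by rw [v_one]; omega)
  rw [v_one] at hu
  have key : ∃ t : K, t ≠ 0 ∧ w.v t = n ∧ χ t = 0 ∧ χ (1 - e₁ * t) = 1 := by
    have ht0 : -z / e₁ ≠ 0 := div_ne_zero (neg_ne_zero.2 hz) he10
    have hvt : w.v (-z / e₁) = n := by
      rw [v_div w (neg_ne_zero.2 hz) he10, v_neg, hvz, hve1]; simp
    rcases zmod2_cases (χ (-z / e₁)) with h | h
    · refine ⟨-z / e₁, ht0, hvt, h, ?_⟩
      rw [mul_div_cancel₀ _ he10, sub_neg_eq_add, hχz]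
    · refine ⟨-z / e₁ * (1 + z), mul_ne_zero ht0 hu.1, ?_, ?_, ?_⟩
      · rw [w.v_mul ht0 hu.1, hvt, hu.2, add_zero]
      · rw [hχ ht0 hu.1, h, hχz]; decide
      · have h1 : 1 - e₁ * (-z / e₁ * (1 + z)) = (1 + z) + z * z := by
          field_simp; ring
        rw [h1, chi_add hχ hvan hu.1, hχz]
        exact (hGz.mul hGz).mono (by omega)
  obtain ⟨t, ht, hvt, hχt, hχt1⟩ := key
  have hGt : w.G n t := Or.inr hvt.ge
  have hGe : w.G 0 e₁ := Or.inr hve1.ge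
  have h1 := add_ne_and_v (w := w) (one_ne_zero (α := K)) (hGe.mul hGt).neg (by rw [v_one]; omega)
  rw [v_one, ← sub_eq_add_neg] at h1
  have hD : w.G 1 (e₁ - e₂) := by
    have := (isUnit₁_iff.1 he₁).sub (isUnit₁_iff.1 he₂)
    simpa using this
  have hDt := hD.mul hGt
  have heq : 1 - e₂ * t = (1 - e₁ * t) + (e₁ - e₂) * t := by ring
  have h2 := add_ne_and_v (w := w) h1.1 hDt (by omega)
  have h3 := chi_add hχ hvan h1.1 (hDt.mono (by omega))
  rw [← heq] at h2 h3
  have ht' := inv_ne_zero ht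
  have ex1 : t⁻¹ - e₁ = (1 - e₁ * t) * t⁻¹ := by field_simp
  have ex2 : t⁻¹ - e₂ = (1 - e₂ * t) * t⁻¹ := by field_simp
  have n1 : t⁻¹ - e₁ ≠ 0 := by rw [ex1]; exact mul_ne_zero h1.1 ht'
  have n2 : t⁻¹ - e₂ ≠ 0 := by rw [ex2]; exact mul_ne_zero h2.1 ht'
  have c0 : χ t⁻¹ = 0 := by rw [chi_inv hχ ht, hχt]
  have c1 : χ (t⁻¹ - e₁) = 1 := by rw [ex1, hχ h1.1 ht', c0, hχt1]; simp
  have c2 : χ (t⁻¹ - e₂) = 1 := by rw [ex2, hχ h2.1 ht', c0, h3, hχt1]; simp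
  refine ⟨t⁻¹, ht', sub_ne_zero.1 n1, sub_ne_zero.1 n2, ?_, c0, c1⟩
  rw [hχ (mul_ne_zero ht' n1) n2, hχ ht' n1, c0, c1, c2]; decide

/-- The displacement `y` giving a point with first coordinate `1`, when `χ e₁ = 0`. -/
theorem exists_y (hfin : Finite (IsLocalRing.ResidueField w.vring))
    (hχ : ∀ ⦃x y : K⦄, x ≠ 0 → y ≠ 0 → χ (x * y) = χ x + χ y) (hn : 1 ≤ n)
    (hvan : ∀ u : K, w.IsUnit₁ ((n : ℤ) + 1) u → χ u = 0)
    {z : K} (hz : z ≠ 0) (hvz : w.v z = n) (hχz : χ (1 + z) = 1)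
    {e D : K} (he0 : e ≠ 0) (hve : w.v e = 0) (hχe : χ e = 0)
    (hD : D ≠ 0) (hvD : w.v D ≤ 2 * n) :
    ∃ y : K, y ≠ 0 ∧ e + y ≠ 0 ∧ 1 + D / y ≠ 0 ∧ χ (e + y) = 1 ∧ χ (1 + D / y) = 1 := by
  have hGz : w.G n z := Or.inr hvz.ge
  have hu := add_ne_and_v (w := w) (one_ne_zero (α := K)) hGz (by rw [v_one]; omega)
  rw [v_one] at hu
  rcases hvD.lt_or_eq with hlt | heq
  · have key : ∃ y : K, y ≠ 0 ∧ w.v y = n ∧ y + D ≠ 0 ∧ χ (e + y) = 1 := by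
      by_cases hyD : e * z + D = 0
      · have h1 : e * (z * (1 + z)) ≠ 0 := mul_ne_zero he0 (mul_ne_zero hz hu.1)
        refine ⟨e * (z * (1 + z)), h1, ?_, ?_, ?_⟩
        · rw [w.v_mul he0 (mul_ne_zero hz hu.1), w.v_mul hz hu.1]; omega
        · have : e * (z * (1 + z)) + D = e * (z * z) := by linear_combination hyD
          rw [this]
          exact mul_ne_zero he0 (mul_ne_zero hz hz)
        · have h2 : e + e * (z * (1 + z)) = e * ((1 + z) + z * z) := by ring
          have h3 := hGz.mul hGz
          have h4 := add_ne_and_v (w := w) hu.1 h3 (by omega)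
          rw [h2, hχ he0 h4.1, chi_add hχ hvan hu.1 (h3.mono (by omega)), hχe, hχz]; simp
      · refine ⟨e * z, mul_ne_zero he0 hz, ?_, hyD, ?_⟩
        · rw [w.v_mul he0 hz]; omega
        · have h2 : e + e * z = e * (1 + z) := by ring
          rw [h2, hχ he0 hu.1, hχe, hχz]; simp
    obtain ⟨y, hy, hvy, hyD, hχy⟩ := key
    have hGy : w.G n y := Or.inr hvy.ge
    have hey := add_ne_and_v (w := w) he0 hGy (by omega)
    have hτ : D / y ≠ 0 := div_ne_zero hD hy
    have hvτ : w.v (D / y) = w.v D - n := by rw [v_div w hD hy, hvy]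
    have h1τ : 1 + D / y ≠ 0 := by
      intro h
      apply hyD
      field_simp at h
      simpa using h
    rcases zmod2_cases (χ (1 + D / y)) with h | h
    · set τ := D / y with hτdef
      have hGr : w.G 1 ((1 + τ) * z / τ) := by
        have hm := w.min_le_v_add (one_ne_zero (α := K)) hτ h1τ
        rw [v_one, hvτ] at hm
        refine Or.inr ?_
        rw [v_div w (mul_ne_zero h1τ hz) hτ, w.v_mul h1τ hz, hvz, hvτ]
        rcases min_choice 0 (w.v D - n) with h4 | h4 <;> omega
      set r := (1 + τ) * z / τ with hr
      have h1r := add_ne_and_v (w := w) (one_ne_zero (α := K)) hGr (by rw [v_one]; omega)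
      rw [v_one] at h1r
      have hdiff : e + y / (1 + r) = (e + y) + -(y * r / (1 + r)) := by
        have := h1r.1
        field_simp; ring
      have hG := ((hGy.mul hGr).div h1r.1).neg
      have hey' := add_ne_and_v (w := w) hey.1 hG (by omega)
      have hχ' := chi_add hχ hvan hey.1 (hG.mono (by omega))
      rw [← hdiff] at hey' hχ'
      have hD' : 1 + D / (y / (1 + r)) = (1 + τ) * (1 + z) := by
        have h5 : D / (y / (1 + r)) = τ * (1 + r) := by
          rw [hτdef]; have := h1r.1; field_simp
        have h6 : τ * r = (1 + τ) * z := by rw [hr]; field_simp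
        rw [h5]; linear_combination h6
      refine ⟨y / (1 + r), div_ne_zero hy h1r.1, hey'.1, ?_, by rw [hχ', hχy], ?_⟩
      · rw [hD']; exact mul_ne_zero h1τ hu.1
      · rw [hD', hχ h1τ hu.1, h, hχz]; simp
    · exact ⟨y, hy, hey.1, h1τ, hχy, h⟩
  · have hδ : D / (e * z * z) ≠ 0 := div_ne_zero hD (mul_ne_zero (mul_ne_zero he0 hz) hz)
    have hvδ : w.v (D / (e * z * z)) = 0 := by
      rw [v_div w hD (mul_ne_zero (mul_ne_zero he0 hz) hz), w.v_mul (mul_ne_zero he0 hz) hz,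
        w.v_mul he0 hz]; omega
    obtain ⟨a, ha, hva, h1, h2⟩ := exists_pair hfin hχ hn hvan hz hvz hχz hδ hvδ
    have hGa : w.G 0 a := Or.inr hva.ge
    have hGd : w.G 0 (D / (e * z * z) / a) := Or.inr (by rw [v_div w hδ ha]; omega)
    have u1 := add_ne_and_v (w := w) (one_ne_zero (α := K)) (hGa.mul hGz) (by rw [v_one]; omega)
    have u2 := add_ne_and_v (w := w) (one_ne_zero (α := K)) (hGd.mul hGz) (by rw [v_one]; omega)
    have e1 : e + e * (a * z) = e * (1 + a * z) := by ring
    have e2 : 1 + D / (e * (a * z)) = 1 + D / (e * z * z) / a * z := by field_simp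
    refine ⟨e * (a * z), mul_ne_zero he0 (mul_ne_zero ha hz), ?_, ?_, ?_, ?_⟩
    · rw [e1]; exact mul_ne_zero he0 u1.1
    · rw [e2]; exact u2.1
    · rw [e1, hχ he0 u1.1, hχe, h1]; simp
    · rw [e2, h2]

end chi

end DValuation

theorem closure_top_of_mem {S : Set (ZMod 2 × ZMod 2)} {b : ZMod 2}
    (h1 : ((0 : ZMod 2), (1 : ZMod 2)) ∈ S) (h2 : ((1 : ZMod 2), b) ∈ S) :
    AddSubgroup.closure S = ⊤ := by
  have m1 := AddSubgroup.subset_closure h1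
  have m2 := AddSubgroup.subset_closure h2
  have m3 := add_mem m1 m2
  have m0 := zero_mem (AddSubgroup.closure S)
  rw [eq_top_iff]
  rintro ⟨p, q⟩ -
  rcases zmod2_cases p with rfl | rfl <;> rcases zmod2_cases q with rfl | rfl <;>
    rcases zmod2_cases b with rfl | rfl
  all_goals first | exact m0 | exact m1 | exact m2 | exact m3

/-- Case (iii) of Proposition 4:  `K` a finite extension of `ℚ₂` with
normalized valuation `v`, `L = K(√d)` a ramified quadratic extension,
`χ : K^× → ℤ/2ℤ` the homomorphism with kernel `N_{L|K}(L^×)`, factoring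
through `U₁/U_{n+1}` but not through `U₁/U_n` (`n ≥ 1`), and `e₁, e₂`
distinct `1`-units.  If `e₁/e₂ ∉ U_{2n+1}`, the subgroup of `(ℤ/2ℤ)²`
generated by the image set `Im` is all of `(ℤ/2ℤ)²`. -/
theorem chatelet_descent_image_case_iii
    (K : Type*) [Field K] [Algebra ℚ_[2] K] [FiniteDimensional ℚ_[2] K]
    (w : DValuation K)
    (hext : ∀ x : ℚ_[2], x ≠ 0 →
      w.v (algebraMap ℚ_[2] K x) = w.v (algebraMap ℚ_[2] K 2) * x.valuation)
    (L : Type*) [Field L] [Algebra K L] (hL2 : Module.finrank K L = 2)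
    (d : K) (hd0 : d ≠ 0) (hd : ¬ IsSquare d)
    (hdL : ∃ δ : L, δ ^ 2 = algebraMap K L d)
    (wL : DValuation L)
    (hram : ∀ x : K, x ≠ 0 → wL.v (algebraMap K L x) = 2 * w.v x)
    (χ : K → ZMod 2)
    (hχ : ∀ ⦃x y : K⦄, x ≠ 0 → y ≠ 0 → χ (x * y) = χ x + χ y)
    (hker : ∀ x : K, x ≠ 0 → (χ x = 0 ↔ ∃ y : L, y ≠ 0 ∧ Algebra.norm K y = x))
    (n : ℕ) (hn : 1 ≤ n)
    (hvan : ∀ u : K, w.IsUnit₁ ((n : ℤ) + 1) u → χ u = 0)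
    (hnonvan : ∃ u : K, w.IsUnit₁ (n : ℤ) u ∧ χ u ≠ 0)
    (e₁ e₂ : K) (he₁ : w.IsUnit₁ 1 e₁) (he₂ : w.IsUnit₁ 1 e₂) (hee : e₁ ≠ e₂)
    (hcong : ¬ w.IsUnit₁ (2 * (n : ℤ) + 1) (e₁ / e₂)) :
    AddSubgroup.closure
        (({((0 : ZMod 2), (0 : ZMod 2)), (χ (e₁ * e₂), χ (-e₁)),
            (χ e₁, χ (e₁ * (e₁ - e₂))), (χ e₂, χ (e₂ - e₁))} : Set (ZMod 2 × ZMod 2)) ∪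
          {p : ZMod 2 × ZMod 2 | ∃ x : K, x ≠ 0 ∧ x ≠ e₁ ∧ x ≠ e₂ ∧
            χ (x * (x - e₁) * (x - e₂)) = 0 ∧ p = (χ x, χ (x - e₁))}) =
      (⊤ : AddSubgroup (ZMod 2 × ZMod 2)) := by
  obtain ⟨z, hz, hvz, hχz⟩ := DValuation.exists_u hvan hnonvan
  obtain ⟨x, hx, hx1, hx2, hx3, hx4, hx5⟩ :=
    DValuation.exists_point_zero_one hχ hn hvan hz hvz hχz he₁ he₂
  have m1 : ∀ A : Set (ZMod 2 × ZMod 2), ((0 : ZMod 2), (1 : ZMod 2)) ∈ A ∪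
      {p : ZMod 2 × ZMod 2 | ∃ x : K, x ≠ 0 ∧ x ≠ e₁ ∧ x ≠ e₂ ∧
            χ (x * (x - e₁) * (x - e₂)) = 0 ∧ p = (χ x, χ (x - e₁))} := fun A =>
    Or.inr ⟨x, hx, hx1, hx2, hx3, by rw [hx4, hx5]⟩
  rcases zmod2_cases (χ e₁) with h | h
  · obtain ⟨he10, hve1⟩ := DValuation.v_unit he₁ le_rfl
    obtain ⟨he20, hve2⟩ := DValuation.v_unit he₂ le_rfl
    have hD : e₁ - e₂ ≠ 0 := sub_ne_zero.2 hee
    have hvD : w.v (e₁ - e₂) ≤ 2 * n := by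
      by_contra hlt
      apply hcong
      rw [DValuation.isUnit₁_iff]
      have h1 : e₁ / e₂ - 1 = (e₁ - e₂) / e₂ := by field_simp
      rw [h1]
      refine Or.inr ?_
      rw [DValuation.v_div w hD he20]; omega
    obtain ⟨y, hy, hey, hDy, c1, c2⟩ := DValuation.exists_y (w.finite_residue hext) hχ hn hvan
      hz hvz hχz he10 hve1 h hD hvD
    refine closure_top_of_mem (b := χ y) (m1 _) (Or.inr ⟨e₁ + y, hey, ?_, ?_, ?_, ?_⟩)
    · simpa using hy
    · intro h0
      apply hDy
      have : e₁ - e₂ = -y := by linear_combination h0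
      rw [this, neg_div, div_self hy]; ring
    · have h1 : (e₁ + y) * (e₁ + y - e₁) * (e₁ + y - e₂)
          = (e₁ + y) * y * (y * (1 + (e₁ - e₂) / y)) := by field_simp; ring
      rw [h1, hχ (mul_ne_zero hey hy) (mul_ne_zero hy hDy), hχ hey hy, hχ hy hDy, c1, c2]
      rcases zmod2_cases (χ y) with h | h <;> rw [h] <;> decide
    · rw [c1, add_sub_cancel_left]
  · refine closure_top_of_mem (b := χ (e₁ * (e₁ - e₂))) (m1 _) (Or.inl ?_)
    rw [← h]; simp
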